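/- arXiv:1002.1377 — 2 statements merged into one kernel-verified Lean document; each statement's English description precedes it below -/
import Mathlib

section
/- Let T be the infinite binary tree with weight w(t) = (1+|t|)^{-β} where β > 2, and let V* : ℓ₁(T) → ℓ₂(T,W) be the operator (V*μ)(t) = Σ_{u ⪰ t} μ(u). Then there exists a constant C₂ = C₂(β) > 0 such that for all integers n ≥ 2, e_n(V*) ≤ C₂ · (ln n)^{1-β/2} · n^{-1/2}. -/
open scoped ENNReal

/-- A node of the infinite binary tree `T` is a finite binary string;
its level `|t|` is its length. -/
abbrev Node : Type := List Bool

/-- `μ` belongs to `ℓ₁(T)`, i.e. `Σ_t |μ(t)| < ∞`. -/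
def MemL1 (μ : Node → ℝ) : Prop := Summable fun t : Node => |μ t|

/-- The `ℓ₁(T)` norm `‖μ‖₁ = Σ_t |μ(t)|`. -/
noncomputable def l1Norm (μ : Node → ℝ) : ℝ := ∑' t : Node, |μ t|

/-- `(V*μ)(t) = Σ_{u ⪰ t} μ(u)`, the sum over all nodes `u` having `t` as a prefix
(including `u = t`). -/
noncomputable def Vstar (μ : Node → ℝ) (t : Node) : ℝ := ∑' u : {u : Node // t <+: u}, μ u.1

/-- The weight `w(t) = (1 + |t|)^{-β}`. -/
noncomputable def wgt (β : ℝ) (t : Node) : ℝ := ((1 : ℝ) + (t.length : ℝ)) ^ (-β)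

/-- The squared distance of `f, g` in the weighted space `ℓ₂(T,W)`,
`Σ_t w(t) (f(t) - g(t))²`, computed in `ℝ≥0∞`. -/
noncomputable def distSqW (β : ℝ) (f g : Node → ℝ) : ℝ≥0∞ :=
  ∑' t : Node, ENNReal.ofReal (wgt β t * (f t - g t) ^ 2)


/-- indicator of `t` being a prefix of `u` -/
noncomputable def ind (t u : Node) : ℝ := if t <+: u then 1 else 0

lemma ind_nonneg (t u : Node) : 0 ≤ ind t u := by unfold ind; split_ifs <;> norm_num
lemma ind_le_one (t u : Node) : ind t u ≤ 1 := by unfold ind; split_ifs <;> norm_num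
lemma ind_sq (t u : Node) : ind t u * ind t u = ind t u := by unfold ind; split_ifs <;> norm_num

/-- nodes of level k -/
def lev : ℕ → Finset Node
  | 0 => {[]}
  | k + 1 => (lev k).image (List.cons true) ∪ (lev k).image (List.cons false)

lemma mem_lev (k : ℕ) (t : Node) : t ∈ lev k ↔ t.length = k := by
  induction k generalizing t with
  | zero => simp [lev]
  | succ k ih =>
    cases t with
    | nil => simp [lev]
    | cons b t => cases b <;> simp [lev, ih]

lemma card_lev (k : ℕ) : (lev k).card ≤ 2 ^ k := by
  induction k with
  | zero => simp [lev]
  | succ k ih =>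
    have h1 := Finset.card_union_le ((lev k).image (List.cons true)) ((lev k).image (List.cons false))
    have h2 := Finset.card_image_le (s := lev k) (f := List.cons true)
    have h3 := Finset.card_image_le (s := lev k) (f := List.cons false)
    rw [lev, pow_succ]
    omega

/-- nodes of level less than K -/
def low (K : ℕ) : Finset Node := (Finset.range K).biUnion lev

lemma mem_low (K : ℕ) (t : Node) : t ∈ low K ↔ t.length < K := by
  simp [low, mem_lev]

lemma sum_low {M : Type*} [AddCommMonoid M] (K : ℕ) (F : Node → M) :
    ∑ t ∈ low K, F t = ∑ k ∈ Finset.range K, ∑ t ∈ lev k, F t := by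
  unfold low
  rw [Finset.sum_biUnion]
  intro i _ j _ hij
  rw [Function.onFun, Finset.disjoint_left]
  intro t h1 h2
  rw [mem_lev] at h1 h2
  exact hij (h1.symm.trans h2)

lemma card_low (K : ℕ) : (low K).card ≤ 2 ^ K := by
  induction K with
  | zero => simp [low]
  | succ k ih =>
    have : low (k+1) = lev k ∪ low k := by
      ext t; simp only [Finset.mem_union, mem_low, mem_lev]; omega
    rw [this]
    have := Finset.card_union_le (lev k) (low k)
    have := card_lev k
    rw [pow_succ]; omega

lemma sum_lev_ind (k : ℕ) (u : Node) : ∑ t ∈ lev k, ind t u ≤ 1 := by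
  have h : ∀ t ∈ lev k, ind t u ≤ if t = u.take k then 1 else 0 := by
    intro t ht
    rw [mem_lev] at ht
    unfold ind
    by_cases hp : t <+: u
    · have : t = u.take k := by rw [← ht]; exact List.prefix_iff_eq_take.mp hp
      simp [← this, hp]
    · rw [if_neg hp]; split_ifs <;> norm_num
  refine (Finset.sum_le_sum h).trans ?_
  rw [Finset.sum_ite_eq']
  split_ifs <;> norm_num

lemma ind_take (t u : Node) (d : ℕ) (h : t.length ≤ d) : ind t (u.take d) = ind t u := by
  unfold ind
  have : t <+: u.take d ↔ t <+: u := by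
    rw [List.prefix_take_iff]; simp [h]
  simp [this]

lemma Vstar_eq (μ : Node → ℝ) (t : Node) : Vstar μ t = ∑' u, μ u * ind t u := by
  unfold Vstar
  refine (tsum_subtype {u : Node | t <+: u} μ).trans ?_
  congr 1
  ext u
  simp [Set.indicator, ind]

lemma summable_mul (μ : Node → ℝ) (hμ : MemL1 μ) (g : Node → ℝ) (c : ℝ) (hg : ∀ u, |g u| ≤ c) :
    Summable fun u => μ u * g u := by
  refine Summable.of_norm_bounded (g := fun u => |μ u| * c) (hμ.mul_right c) ?_
  intro u
  rw [Real.norm_eq_abs, abs_mul]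
  exact mul_le_mul_of_nonneg_left (hg u) (abs_nonneg _)

lemma summable_ind (μ : Node → ℝ) (hμ : MemL1 μ) (t : Node) : Summable fun u => μ u * ind t u :=
  summable_mul μ hμ (ind t) 1 fun u => by rw [abs_of_nonneg (ind_nonneg _ _)]; exact ind_le_one _ _

lemma sum_lev_Vstar (μ : Node → ℝ) (hμ : MemL1 μ) (h1 : l1Norm μ ≤ 1) (k : ℕ) :
    ∑ t ∈ lev k, |Vstar μ t| ≤ 1 := by
  have hs : ∀ t, Summable fun u => |μ u| * ind t u := fun t =>
    summable_ind (fun u => |μ u|) (by simpa [MemL1] using hμ) t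
  have hb : ∀ t ∈ lev k, |Vstar μ t| ≤ ∑' u, |μ u| * ind t u := by
    intro t _
    rw [Vstar_eq]
    have := norm_tsum_le_tsum_norm (f := fun u => μ u * ind t u) (by
      simpa [abs_mul, abs_of_nonneg (ind_nonneg _ _)] using hs t)
    simpa [abs_mul, abs_of_nonneg (ind_nonneg _ _)] using this
  refine (Finset.sum_le_sum hb).trans ?_
  rw [← Summable.tsum_finsetSum (fun t _ => hs t)]
  refine le_trans ?_ h1
  refine Summable.tsum_le_tsum ?_ (summable_sum fun t _ => hs t) hμ
  intro u
  rw [← Finset.mul_sum]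
  exact mul_le_of_le_one_right (abs_nonneg _) (sum_lev_ind k u)

lemma abs_Vstar_le (μ : Node → ℝ) (hμ : MemL1 μ) (h1 : l1Norm μ ≤ 1) (t : Node) :
    |Vstar μ t| ≤ 1 :=
  (Finset.single_le_sum (f := fun t => |Vstar μ t|) (fun _ _ => abs_nonneg _)
    ((mem_lev t.length t).2 rfl)).trans (sum_lev_Vstar μ hμ h1 t.length)

lemma sum_lev_sq (μ : Node → ℝ) (hμ : MemL1 μ) (h1 : l1Norm μ ≤ 1) (k : ℕ) :
    ∑ t ∈ lev k, (Vstar μ t) ^ 2 ≤ 1 := by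
  refine (Finset.sum_le_sum ?_).trans (sum_lev_Vstar μ hμ h1 k)
  intro t _
  rw [← sq_abs]
  have := abs_Vstar_le μ hμ h1 t
  nlinarith [abs_nonneg (Vstar μ t)]

/-- extreme point selection -/
lemma exists_extreme (μ : Node → ℝ) (hμ : MemL1 μ) (h1 : l1Norm μ ≤ 1) (g : Node → ℝ) (c : ℝ)
    (hg : ∀ u, |g u| ≤ c) :
    ∃ σ : ℤ, σ ∈ Finset.Icc (-1 : ℤ) 1 ∧ ∃ u, (σ : ℝ) * g u ≤ ∑' u, μ u * g u := by
  by_contra hcon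
  push Not at hcon
  set R := ∑' u, μ u * g u with hR
  have h0 := hcon 0 (by simp) []
  have hp := hcon 1 (by simp)
  have hm := hcon (-1) (by simp)
  have hRneg : R < 0 := by simpa using h0
  have hlt : ∀ u, |g u| < -R := by
    intro u
    have a := hp u
    have b := hm u
    push_cast at a b
    rw [abs_lt]; constructor <;> linarith
  have hsg := summable_mul μ hμ g c hg
  have hne : ∃ u, μ u ≠ 0 := by
    by_contra h
    push Not at h
    have : R = 0 := by rw [hR]; simp [h]
    linarith
  obtain ⟨u0, hu0⟩ := hne
  have h3 : ∑' u, -(μ u * g u) < ∑' u, |μ u| * (-R) := by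
    refine Summable.tsum_lt_tsum (i := u0) ?_ ?_ hsg.neg (hμ.mul_right _)
    · intro u
      have := neg_abs_le (μ u * g u)
      rw [abs_mul] at this
      have := mul_le_mul_of_nonneg_left (hlt u).le (abs_nonneg (μ u))
      linarith
    · have := neg_abs_le (μ u0 * g u0)
      rw [abs_mul] at this
      have := mul_lt_mul_of_pos_left (hlt u0) (abs_pos.2 hu0)
      linarith
  rw [tsum_neg, tsum_mul_right] at h3
  have : (∑' u, |μ u|) * (-R) ≤ 1 * (-R) := mul_le_mul_of_nonneg_right h1 (by linarith)
  linarith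

lemma step (μ : Node → ℝ) (hμ : MemL1 μ) (h1 : l1Norm μ ≤ 1) (B : Finset Node)
    (a h S : Node → ℝ) (ha : ∀ t, 0 ≤ a t) (hh : ∀ t, h t = 0 ∨ h t = 1) (P : ℝ)
    (hP : ∀ u, ∑ t ∈ B, a t * h t * ind t u ≤ P) :
    ∃ σ : ℤ, σ ∈ Finset.Icc (-1 : ℤ) 1 ∧ ∃ u : Node,
      ∑ t ∈ B, a t * (S t + h t * (σ * ind t u - Vstar μ t)) ^ 2 ≤ ∑ t ∈ B, a t * S t ^ 2 + P := by
  have hh0 : ∀ t, 0 ≤ h t := fun t => by rcases hh t with h | h <;> rw [h] <;> norm_num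
  set f := Vstar μ with hf
  let g : Node → ℝ := fun u => ∑ t ∈ B, (a t * h t * (S t - f t)) * ind t u
  obtain ⟨σ, hσ, u, hu⟩ := exists_extreme μ hμ h1 g (∑ t ∈ B, |a t * h t * (S t - f t)|) (by
    intro u
    refine (Finset.abs_sum_le_sum_abs _ _).trans (Finset.sum_le_sum fun t _ => ?_)
    rw [abs_mul, abs_of_nonneg (ind_nonneg t u)]
    exact mul_le_of_le_one_right (abs_nonneg _) (ind_le_one _ _))
  refine ⟨σ, hσ, u, ?_⟩
  have hmu : ∑' u, μ u * g u = ∑ t ∈ B, (a t * h t * (S t - f t)) * f t := by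
    have : ∀ u, μ u * g u = ∑ t ∈ B, (a t * h t * (S t - f t)) * (μ u * ind t u) := by
      intro u
      simp only [g, Finset.mul_sum]
      exact Finset.sum_congr rfl fun t _ => by ring
    simp only [this]
    rw [Summable.tsum_finsetSum (fun t _ => (summable_ind μ hμ t).mul_left _)]
    refine Finset.sum_congr rfl fun t _ => ?_
    rw [tsum_mul_left, hf, Vstar_eq]
  rw [hmu] at hu
  have hσ2 : (σ : ℝ) ^ 2 ≤ 1 := by
    rw [Finset.mem_Icc] at hσ
    have a1 : (-1 : ℝ) ≤ σ := by exact_mod_cast hσ.1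
    have a2 : (σ : ℝ) ≤ 1 := by exact_mod_cast hσ.2
    nlinarith
  have key : ∀ t ∈ B, a t * (S t + h t * (σ * ind t u - f t)) ^ 2
      ≤ a t * S t ^ 2 + 2 * (σ * ((a t * h t * (S t - f t)) * ind t u))
        - 2 * ((a t * h t * (S t - f t)) * f t) + a t * h t * ind t u := by
    intro t _
    have e1 : h t ^ 2 = h t := by rcases hh t with h | h <;> rw [h] <;> norm_num
    have e2 := ind_sq t u
    have e3 : a t * (S t + h t * (σ * ind t u - f t)) ^ 2
      = a t * S t ^ 2 + 2 * (σ * ((a t * h t * (S t - f t)) * ind t u))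
        - 2 * ((a t * h t * (S t - f t)) * f t) + σ ^ 2 * (a t * h t * ind t u)
        - a t * h t * f t ^ 2 := by
      linear_combination (a t * (σ * ind t u - f t)^2) * e1 + a t * h t * σ^2 * e2
    have p1 : 0 ≤ a t * h t * ind t u := mul_nonneg (mul_nonneg (ha t) (hh0 t)) (ind_nonneg _ _)
    have p2 : 0 ≤ a t * h t * f t ^ 2 := mul_nonneg (mul_nonneg (ha t) (hh0 t)) (sq_nonneg _)
    nlinarith
  refine (Finset.sum_le_sum key).trans ?_
  rw [Finset.sum_add_distrib, Finset.sum_sub_distrib, Finset.sum_add_distrib, ← Finset.mul_sum,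
    ← Finset.mul_sum, ← Finset.mul_sum]
  have := hP u
  simp only [g] at hu
  linarith

lemma greedy (μ : Node → ℝ) (hμ : MemL1 μ) (h1 : l1Norm μ ≤ 1) (K : ℕ)
    (a : ℕ → ℝ) (ha : ∀ k, 0 ≤ a k) (m : ℕ → ℕ) (j : ℕ) :
    ∃ (σ : ℕ → ℤ) (u : ℕ → Node), (∀ i, σ i ∈ Finset.Icc (-1 : ℤ) 1) ∧
      ∑ t ∈ low K, a t.length * (∑ i ∈ Finset.range j, (if i < m t.length then (1:ℝ) else 0) *
        (σ i * ind t (u i) - Vstar μ t)) ^ 2 ≤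
      ∑ i ∈ Finset.range j, ∑ k ∈ Finset.range K, a k * (if i < m k then 1 else 0) := by
  induction j with
  | zero => exact ⟨fun _ => 0, fun _ => [], by simp, by simp⟩
  | succ j ih =>
    obtain ⟨σ, u, hσ, hle⟩ := ih
    obtain ⟨τ, hτ, v, hv⟩ := step μ hμ h1 (low K) (fun t => a t.length)
      (fun t => if j < m t.length then (1:ℝ) else 0)
      (fun t => ∑ i ∈ Finset.range j, (if i < m t.length then (1:ℝ) else 0) *
        (σ i * ind t (u i) - Vstar μ t)) (fun t => ha _)
      (fun t => by split_ifs <;> simp)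
      (∑ k ∈ Finset.range K, a k * (if j < m k then 1 else 0)) (by
        intro u
        rw [sum_low]
        refine Finset.sum_le_sum fun k _ => ?_
        have : ∑ t ∈ lev k, a t.length * (if j < m t.length then (1:ℝ) else 0) * ind t u
          = ∑ t ∈ lev k, a k * (if j < m k then (1:ℝ) else 0) * ind t u :=
          Finset.sum_congr rfl fun t ht => by rw [(mem_lev k t).1 ht]
        rw [this, ← Finset.mul_sum]
        refine mul_le_of_le_one_right (mul_nonneg (ha k) ?_) (sum_lev_ind k u)
        split_ifs <;> norm_num)
    refine ⟨Function.update σ j τ, Function.update u j v, ?_, ?_⟩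
    · intro i
      by_cases hij : i = j
      · subst hij; simpa using hτ
      · rw [Function.update_of_ne hij]; exact hσ i
    · rw [Finset.sum_range_succ _ j]
      refine le_trans (le_of_eq ?_) (hv.trans (by linarith))
      refine Finset.sum_congr rfl fun t _ => ?_
      rw [Finset.sum_range_succ]
      simp only [Function.update_self]
      congr 3
      refine Finset.sum_congr rfl fun i hi => ?_
      have : i ≠ j := by have := Finset.mem_range.1 hi; omega
      rw [Function.update_of_ne this, Function.update_of_ne this]

lemma distSq_le (β : ℝ) (f g : Node → ℝ) (c : ℝ)
    (h : ∀ K, ∑ k ∈ Finset.range K, ((1:ℝ) + k) ^ (-β) * ∑ t ∈ lev k, (f t - g t) ^ 2 ≤ c) :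
    distSqW β f g ≤ ENNReal.ofReal c := by
  unfold distSqW
  have hnn : ∀ t : Node, 0 ≤ wgt β t * (f t - g t) ^ 2 := fun t => by unfold wgt; positivity
  rw [ENNReal.tsum_eq_iSup_sum]
  refine iSup_le fun s => ?_
  rw [← ENNReal.ofReal_sum_of_nonneg fun t _ => hnn t]
  refine ENNReal.ofReal_le_ofReal ?_
  let K := s.sup List.length + 1
  have hs : s ⊆ low K := by
    intro t ht
    rw [mem_low]
    exact Nat.lt_succ_of_le (Finset.le_sup (f := List.length) ht)
  refine (Finset.sum_le_sum_of_subset_of_nonneg hs fun t _ _ => hnn t).trans ?_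
  refine le_trans (le_of_eq ?_) (h K)
  rw [sum_low]
  refine Finset.sum_congr rfl fun k _ => ?_
  rw [Finset.mul_sum]
  refine Finset.sum_congr rfl fun t ht => ?_
  rw [wgt, (mem_lev k t).1 ht]

lemma round_int (n : ℕ) (hn : 1 ≤ n) (x : ℝ) (hx : |x| ≤ 1) :
    ∃ q : ℤ, q ∈ Finset.Icc (-(n:ℤ)) n ∧ (x - q / n) ^ 2 ≤ 1 / (n:ℝ) ^ 2 := by
  have hn' : (0:ℝ) < n := by exact_mod_cast hn
  rw [abs_le] at hx
  refine ⟨⌊(n:ℝ) * x⌋, ?_, ?_⟩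
  · rw [Finset.mem_Icc]
    constructor
    · rw [Int.le_floor]; push_cast; nlinarith
    · have : ((⌊(n:ℝ) * x⌋ : ℤ) : ℝ) ≤ n := (Int.floor_le _).trans (by nlinarith)
      exact_mod_cast this
  · have h1 := Int.floor_le ((n:ℝ) * x)
    have h2 := Int.lt_floor_add_one ((n:ℝ) * x)
    have e : x - (⌊(n:ℝ) * x⌋ : ℝ) / n = ((n:ℝ) * x - ⌊(n:ℝ) * x⌋) / n := by field_simp
    rw [e, div_pow]
    refine div_le_div_of_nonneg_right ?_ (by positivity)
    nlinarith

/-- the approximant -/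
noncomputable def approx (n L M : ℕ) (m : ℕ → ℕ) (q : {t // t ∈ low L} → ℤ)
    (p : Fin M → ℤ × Node) (t : Node) : ℝ :=
  if h : t ∈ low L then (q ⟨t, h⟩ : ℝ) / n
  else (∑ i : Fin M, (if (i:ℕ) < m t.length then (1:ℝ) else 0) * ((p i).1 * ind t (p i).2))
    / m t.length

open Classical in
/-- the net -/
noncomputable def net (n L M : ℕ) (m d : ℕ → ℕ) : Finset (Node → ℝ) :=
  ((Fintype.piFinset fun _ : {t // t ∈ low L} => Finset.Icc (-(n:ℤ)) n) ×ˢ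
    (Fintype.piFinset fun i : Fin M => Finset.Icc (-1:ℤ) 1 ×ˢ low (d i + 1))).image
    fun x => approx n L M m x.1 x.2

lemma card_net (n L M : ℕ) (m d : ℕ → ℕ) :
    (net n L M m d).card ≤ (2 * n + 1) ^ (2 ^ L) * 2 ^ (∑ i ∈ Finset.range M, (d i + 3)) := by
  classical
  unfold net
  refine Finset.card_image_le.trans ?_
  rw [Finset.card_product, Fintype.card_piFinset, Fintype.card_piFinset]
  refine Nat.mul_le_mul ?_ ?_
  · rw [Finset.prod_const, Finset.card_univ, Fintype.card_coe, Int.card_Icc]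
    have : ((n:ℤ) + 1 - -(n:ℤ)).toNat = 2 * n + 1 := by omega
    rw [this]
    exact Nat.pow_le_pow_right (by omega) (card_low L)
  · rw [← Finset.prod_pow_eq_pow_sum, ← Fin.prod_univ_eq_prod_range (fun i => 2 ^ (d i + 3)) M]
    refine Finset.prod_le_prod' fun i _ => ?_
    rw [Finset.card_product, Int.card_Icc]
    have h1 := card_low (d i + 1)
    have : ((1:ℤ) + 1 - -1).toNat = 3 := rfl
    rw [this]
    have e : 2 ^ (d i + 3) = 4 * 2 ^ (d i + 1) := by ring
    rw [e]
    omega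

lemma net_approx (n L K M : ℕ) (hn : 1 ≤ n) (m d : ℕ → ℕ) (hmL : ∀ k, k < L → m k = 0)
    (hmM : ∀ k, m k ≤ M) (hmK : ∀ k, K ≤ k → m k = 0) (hd : ∀ i k, i < m k → k ≤ d i)
    (w : ℕ → ℝ) (hw0 : ∀ k, 0 ≤ w k) (hw1 : ∀ k, w k ≤ 1)
    (μ : Node → ℝ) (hμ : MemL1 μ) (h1 : l1Norm μ ≤ 1) :
    ∃ g ∈ net n L M m d, ∀ K', ∑ k ∈ Finset.range K', w k * ∑ t ∈ lev k, (Vstar μ t - g t) ^ 2 ≤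
      2 ^ L / (n:ℝ) ^ 2 + ∑ k ∈ Finset.Ico L K', w k * (if m k = 0 then 1 else 0)
        + ∑ k ∈ Finset.Ico L K, w k / m k := by
  set f := Vstar μ with hf
  obtain ⟨σ, u, hσ, hle⟩ := greedy μ hμ h1 K (fun k => w k / (m k : ℝ) ^ 2)
    (fun k => div_nonneg (hw0 k) (sq_nonneg _)) m M
  choose q hq1 hq2 using fun t : Node => round_int n hn (f t) (abs_Vstar_le μ hμ h1 t)
  let Q : {t // t ∈ low L} → ℤ := fun t => q t.1
  let p : Fin M → ℤ × Node := fun i => (σ i, (u i).take (d i))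
  refine ⟨approx n L M m Q p, ?_, ?_⟩
  · classical
    unfold net
    refine Finset.mem_image.2 ⟨(Q, p), ?_, rfl⟩
    rw [Finset.mem_product, Fintype.mem_piFinset, Fintype.mem_piFinset]
    refine ⟨fun t => hq1 t.1, fun i => ?_⟩
    rw [Finset.mem_product]
    refine ⟨hσ i, ?_⟩
    rw [mem_low]
    simp only [p, List.length_take]
    omega
  intro K'
  set g := approx n L M m Q p with hg
  -- low levels
  have e1 : ∀ k, k < L → w k * ∑ t ∈ lev k, (f t - g t) ^ 2 ≤ 2 ^ k / (n:ℝ) ^ 2 := by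
    intro k hk
    have : ∑ t ∈ lev k, (f t - g t) ^ 2 ≤ ∑ t ∈ lev k, 1 / (n:ℝ) ^ 2 := by
      refine Finset.sum_le_sum fun t ht => ?_
      have hl : t ∈ low L := by rw [mem_low, (mem_lev k t).1 ht]; exact hk
      have : g t = q t / n := by simp only [hg, approx, dif_pos hl, Q]
      rw [this]
      exact hq2 t
    rw [Finset.sum_const, nsmul_eq_mul] at this
    have hc : ((lev k).card : ℝ) ≤ 2 ^ k := by exact_mod_cast card_lev k
    have h0 : 0 ≤ ∑ t ∈ lev k, (f t - g t) ^ 2 := Finset.sum_nonneg fun t _ => sq_nonneg _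
    calc w k * ∑ t ∈ lev k, (f t - g t) ^ 2 ≤ 1 * ∑ t ∈ lev k, (f t - g t) ^ 2 :=
          mul_le_mul_of_nonneg_right (hw1 k) h0
      _ ≤ (lev k).card * (1 / (n:ℝ) ^ 2) := by rw [one_mul]; exact this
      _ ≤ 2 ^ k * (1 / (n:ℝ) ^ 2) := mul_le_mul_of_nonneg_right hc (by positivity)
      _ = _ := by ring
  -- levels with no samples
  have e2 : ∀ k, L ≤ k → m k = 0 → ∑ t ∈ lev k, (f t - g t) ^ 2 ≤ 1 := by
    intro k hk hm
    refine le_trans (le_of_eq ?_) (sum_lev_sq μ hμ h1 k)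
    refine Finset.sum_congr rfl fun t ht => ?_
    have hl : t ∉ low L := by rw [mem_low, (mem_lev k t).1 ht]; omega
    have : g t = 0 := by simp only [hg, approx, dif_neg hl, (mem_lev k t).1 ht, hm]; simp
    rw [this, sub_zero]
  -- sampled levels
  let A : ℕ → ℝ := fun k => ∑ t ∈ lev k, w t.length / (m t.length : ℝ) ^ 2 *
    (∑ i ∈ Finset.range M, (if i < m t.length then (1:ℝ) else 0) * (σ i * ind t (u i) - f t)) ^ 2
  have hA0 : ∀ k, 0 ≤ A k := fun k => Finset.sum_nonneg fun t _ =>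
    mul_nonneg (div_nonneg (hw0 _) (sq_nonneg _)) (sq_nonneg _)
  have hcount : ∀ k, ∑ i ∈ Finset.range M, (if i < m k then (1:ℝ) else 0) = m k := by
    intro k
    rw [Finset.sum_boole]
    congr 1
    have : Finset.filter (fun i => i < m k) (Finset.range M) = Finset.range (m k) := by
      ext i
      have := hmM k
      simp only [Finset.mem_filter, Finset.mem_range]; omega
    rw [this, Finset.card_range]
  have e3 : ∀ k, L ≤ k → m k ≠ 0 → w k * ∑ t ∈ lev k, (f t - g t) ^ 2 = A k := by
    intro k hk hm
    have hm' : (m k : ℝ) ≠ 0 := by exact_mod_cast hm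
    rw [Finset.mul_sum]
    refine Finset.sum_congr rfl fun t ht => ?_
    have hl : t ∉ low L := by rw [mem_low, (mem_lev k t).1 ht]; omega
    have htk := (mem_lev k t).1 ht
    have : g t = (∑ i ∈ Finset.range M, (if i < m k then (1:ℝ) else 0) * (σ i * ind t (u i)))
        / m k := by
      simp only [hg, approx, dif_neg hl, htk]
      rw [← Fin.sum_univ_eq_sum_range
        (fun i => (if i < m k then (1:ℝ) else 0) * (σ i * ind t (u i))) M]
      congr 1
      refine Finset.sum_congr rfl fun i _ => ?_
      simp only [p]
      by_cases him : (i:ℕ) < m k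
      · rw [ind_take]
        rw [htk]; exact hd i k him
      · simp [him]
    rw [htk, this]
    have e : ∑ i ∈ Finset.range M, (if i < m k then (1:ℝ) else 0) * (σ i * ind t (u i) - f t)
      = ∑ i ∈ Finset.range M, (if i < m k then (1:ℝ) else 0) * (σ i * ind t (u i)) - m k * f t := by
      simp only [mul_sub]
      rw [Finset.sum_sub_distrib, ← Finset.sum_mul, hcount]
    rw [e]
    field_simp
    ring
  have hAsum : ∑ k ∈ Finset.range K, A k ≤ ∑ k ∈ Finset.Ico L K, w k / m k := by
    have : ∑ k ∈ Finset.range K, A k ≤ ∑ k ∈ Finset.range K, w k / m k := by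
      rw [sum_low, Finset.sum_comm] at hle
      refine hle.trans (le_of_eq ?_)
      refine Finset.sum_congr rfl fun k _ => ?_
      rw [← Finset.mul_sum, hcount]
      by_cases hm : m k = 0
      · simp [hm]
      · have hm' : (m k : ℝ) ≠ 0 := by exact_mod_cast hm
        field_simp
    refine this.trans (le_of_eq ?_)
    symm
    refine Finset.sum_subset (fun k hk => ?_) (fun k hk hk' => ?_)
    · simp only [Finset.mem_Ico, Finset.mem_range] at *; omega
    · simp only [Finset.mem_Ico, Finset.mem_range] at *
      rw [hmL k (by omega)]; simp
  have hpt : ∀ k ∈ Finset.range K', w k * ∑ t ∈ lev k, (f t - g t) ^ 2 ≤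
      (if k < L then 2 ^ k / (n:ℝ) ^ 2 else 0)
       + (if L ≤ k then w k * (if m k = 0 then 1 else 0) else 0)
       + (if k < K then A k else 0) := by
    intro k _
    by_cases hk : k < L
    · have := e1 k hk
      have h0 : (0:ℝ) ≤ if k < K then A k else 0 := by split_ifs; exacts [hA0 k, le_rfl]
      rw [if_pos hk, if_neg (by omega)]
      linarith
    · rw [if_neg hk, if_pos (by omega)]
      by_cases hm : m k = 0
      · have h0 : (0:ℝ) ≤ if k < K then A k else 0 := by split_ifs; exacts [hA0 k, le_rfl]
        have := mul_le_mul_of_nonneg_left (e2 k (by omega) hm) (hw0 k)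
        rw [if_pos hm]
        linarith
      · have hkK : k < K := by
          by_contra h
          exact hm (hmK k (by omega))
        rw [if_neg hm, if_pos hkK, e3 k (by omega) hm]
        simp
  refine (Finset.sum_le_sum hpt).trans ?_
  rw [Finset.sum_add_distrib, Finset.sum_add_distrib]
  refine add_le_add (add_le_add ?_ ?_) (le_trans ?_ hAsum)
  · rw [← Finset.sum_filter]
    have : ∑ k ∈ (Finset.range K').filter (fun k => k < L), 2 ^ k / (n:ℝ) ^ 2
        ≤ ∑ k ∈ Finset.range L, 2 ^ k / (n:ℝ) ^ 2 := by
      refine Finset.sum_le_sum_of_subset_of_nonneg (fun k hk => ?_) (fun k _ _ => by positivity)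
      simp only [Finset.mem_filter, Finset.mem_range] at *; omega
    refine this.trans ?_
    rw [← Finset.sum_div]
    refine div_le_div_of_nonneg_right ?_ (by positivity)
    have : ∑ k ∈ Finset.range L, (2:ℝ) ^ k = 2 ^ L - 1 := by
      rw [geom_sum_eq (by norm_num)]; norm_num
    rw [this]; linarith
  · rw [← Finset.sum_filter]
    refine le_of_eq (Finset.sum_congr ?_ fun _ _ => rfl)
    ext k; simp only [Finset.mem_filter, Finset.mem_range, Finset.mem_Ico]; omega
  · rw [← Finset.sum_filter]
    refine Finset.sum_le_sum_of_subset_of_nonneg (fun k hk => ?_) (fun k _ _ => hA0 k)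
    simp only [Finset.mem_filter, Finset.mem_range] at *; omega

lemma tail_sum (θ : ℝ) (hθ : 0 < θ) (L K : ℕ) (hL : 1 ≤ L) :
    ∑ k ∈ Finset.Ico L K, ((1:ℝ) + k) ^ (-(1 + θ)) ≤ (L:ℝ) ^ (-θ) / θ := by
  have hstep : ∀ k : ℕ, 1 ≤ k →
      ((1:ℝ) + k) ^ (-(1 + θ)) ≤ ((k:ℝ) ^ (-θ) - ((k + 1 : ℕ):ℝ) ^ (-θ)) / θ := by
    intro k hk
    have hk' : (0:ℝ) < k := by exact_mod_cast hk
    have hb : (0:ℝ) < 1 + k := by linarith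
    rw [le_div_iff₀ hθ]
    push_cast
    rw [add_comm (k:ℝ) 1]
    have h1 : (k:ℝ) ^ (-θ) = (1 + k : ℝ) ^ (-θ) * ((1 + k) / k : ℝ) ^ θ := by
      rw [Real.div_rpow hb.le hk'.le, Real.rpow_neg hb.le, Real.rpow_neg hk'.le]
      have := Real.rpow_pos_of_pos hb θ
      field_simp
    have h2 : (1:ℝ) + θ * (1 / (1 + k)) ≤ ((1 + k) / k : ℝ) ^ θ := by
      have hp : (0:ℝ) < (1 + k) / k := by positivity
      rw [Real.rpow_def_of_pos hp]
      have hlog : 1 / (1 + k : ℝ) ≤ Real.log ((1 + k) / k) := by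
        have := Real.one_sub_inv_le_log_of_pos hp
        refine le_trans (le_of_eq ?_) this
        field_simp; ring
      have := Real.add_one_le_exp (Real.log ((1 + k : ℝ) / k) * θ)
      nlinarith
    have h3 : (1 + k : ℝ) ^ (-(1 + θ)) = (1 + k : ℝ) ^ (-θ) * (1 / (1 + k)) := by
      rw [show -(1 + θ) = -θ + -1 by ring, Real.rpow_add hb, Real.rpow_neg_one, one_div]
    rw [h1, h3]
    have := mul_le_mul_of_nonneg_left h2 (Real.rpow_nonneg hb.le (-θ))
    linarith
  by_cases hLK : L ≤ K
  · have : ∑ k ∈ Finset.Ico L K, ((1:ℝ) + k) ^ (-(1 + θ)) ≤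
        ((L:ℝ) ^ (-θ) - (K:ℝ) ^ (-θ)) / θ := by
      induction K, hLK using Nat.le_induction with
      | base => simp
      | succ K hK ih =>
        rw [Finset.sum_Ico_succ_top hK]
        have := hstep K (hL.trans hK)
        rw [sub_div] at *
        linarith
    refine this.trans (div_le_div_of_nonneg_right ?_ hθ.le)
    have := Real.rpow_nonneg (Nat.cast_nonneg K : (0:ℝ) ≤ K) (-θ)
    linarith
  · rw [Finset.Ico_eq_empty (by omega)]
    simp only [Finset.sum_empty]
    positivity

lemma big_case (θ : ℝ) (hθ : 0 < θ) (n L : ℕ) (hL : 6 ≤ L) (hn1 : 4 ^ L ≤ n)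
    (hn2 : n < 2 ^ (2 * L + 2)) (c : ℝ) (hc : c = 1 / (4 * (1 / θ + 4))) :
    ∃ N : Finset (Node → ℝ), N.card ≤ 2 ^ (n - 1) ∧
      ∀ μ : Node → ℝ, MemL1 μ → l1Norm μ ≤ 1 → ∃ g ∈ N, ∀ K',
        ∑ k ∈ Finset.range K', ((1:ℝ) + k) ^ (-(2 + 2 * θ)) * ∑ t ∈ lev k, (Vstar μ t - g t) ^ 2
          ≤ 2 ^ L / (n:ℝ) ^ 2 + 3 * ((L:ℝ) ^ (-(2 * θ)) / (θ * c * n)) := by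
  have hnpos : 0 < n := lt_of_lt_of_le (by positivity) hn1
  have hnR : (0:ℝ) < n := by exact_mod_cast hnpos
  have hLR : (0:ℝ) < L := by exact_mod_cast (by omega : 0 < L)
  have hc0 : 0 < c := by rw [hc]; positivity
  have hcθ : 4 * c + c / θ = 1 / 4 := by
    rw [hc]; field_simp; ring
  have hc1 : c ≤ 1 := by
    have : 0 < c / θ := by positivity
    linarith
  set X : ℝ := c * n * (L:ℝ) ^ θ with hX
  have hLθ : 0 < (L:ℝ) ^ θ := Real.rpow_pos_of_pos hLR θ
  have hX0 : 0 < X := by positivity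
  let x : ℕ → ℝ := fun k => X * ((1:ℝ) + k) ^ (-(1 + θ))
  have hx0 : ∀ k, 0 < x k := fun k => by
    have : (0:ℝ) < 1 + k := by positivity
    exact mul_pos hX0 (Real.rpow_pos_of_pos this _)
  have hxanti : ∀ k l, k ≤ l → x l ≤ x k := by
    intro k l hkl
    refine mul_le_mul_of_nonneg_left ?_ hX0.le
    refine Real.rpow_le_rpow_of_nonpos (by positivity) ?_ (by linarith)
    have : (k:ℝ) ≤ l := by exact_mod_cast hkl
    linarith
  have hxle : ∀ k, L ≤ k → x k ≤ c * n / (1 + k) := by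
    intro k hk
    have hk' : (L:ℝ) ≤ k := by exact_mod_cast hk
    have hb : (0:ℝ) < 1 + k := by positivity
    have h1 : (L:ℝ) ^ θ ≤ (1 + k : ℝ) ^ θ := Real.rpow_le_rpow hLR.le (by linarith) hθ.le
    have h3 : (1 + k : ℝ) ^ (-(1 + θ)) = ((1 + k : ℝ) ^ θ)⁻¹ * (1 + k : ℝ)⁻¹ := by
      rw [show -(1 + θ) = -θ + -1 by ring, Real.rpow_add hb, Real.rpow_neg_one, Real.rpow_neg hb.le]
    have hbθ : 0 < (1 + k : ℝ) ^ θ := Real.rpow_pos_of_pos hb θ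
    simp only [x, hX]
    rw [h3]
    calc c * n * (L:ℝ) ^ θ * (((1 + k : ℝ) ^ θ)⁻¹ * (1 + k : ℝ)⁻¹)
        ≤ c * n * (1 + k : ℝ) ^ θ * (((1 + k : ℝ) ^ θ)⁻¹ * (1 + k : ℝ)⁻¹) := by gcongr
      _ = c * n / (1 + k) := by field_simp
  let m : ℕ → ℕ := fun k => if L ≤ k then ⌊x k⌋₊ else 0
  have hmL : ∀ k, k < L → m k = 0 := fun k hk => by simp only [m]; rw [if_neg (by omega)]
  have hmle : ∀ k, L ≤ k → (m k : ℝ) ≤ x k := by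
    intro k hk
    simp only [m, if_pos hk]
    exact Nat.floor_le (hx0 k).le
  have hmlt : ∀ k, L ≤ k → x k < m k + 1 := by
    intro k hk
    simp only [m, if_pos hk]
    exact Nat.lt_floor_add_one _
  have hanti : ∀ k l, L ≤ k → k ≤ l → m l ≤ m k := by
    intro k l hk hl
    simp only [m, if_pos hk, if_pos (hk.trans hl)]
    exact Nat.floor_le_floor (hxanti k l hl)
  have hmM : ∀ k, m k ≤ m L := by
    intro k
    by_cases hk : L ≤ k
    · exact hanti L k le_rfl hk
    · rw [hmL k (by omega)]; omega
  have hmK : ∀ k, n ≤ k → m k = 0 := by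
    intro k hk
    by_cases hLk : L ≤ k
    · have h1 := hxle k hLk
      have h2 : c * n / (1 + k) < 1 := by
        have hk' : (n:ℝ) ≤ k := by exact_mod_cast hk
        rw [div_lt_one (by positivity)]
        nlinarith
      simp only [m, if_pos hLk]
      exact Nat.floor_eq_zero.2 (h1.trans_lt h2)
    · exact hmL k (by omega)
  let d : ℕ → ℕ := fun i => L + ((Finset.Ico L n).filter fun k => i < m k).card
  have hd : ∀ i k, i < m k → k ≤ d i := by
    intro i k hik
    have hLk : L ≤ k := by
      by_contra h
      rw [hmL k (by omega)] at hik; omega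
    have hkn : k < n := by
      by_contra h
      rw [hmK k (by omega)] at hik; omega
    have hsub : Finset.Ico L (k+1) ⊆ (Finset.Ico L n).filter fun k => i < m k := by
      intro l hl
      rw [Finset.mem_Ico] at hl
      rw [Finset.mem_filter, Finset.mem_Ico]
      exact ⟨⟨hl.1, by omega⟩, hik.trans_le (hanti l k hl.1 (by omega))⟩
    have := Finset.card_le_card hsub
    rw [Nat.card_Ico] at this
    simp only [d]
    omega
  have hbits : (∑ i ∈ Finset.range (m L), (d i + 3)) = m L * (L + 3) + ∑ k ∈ Finset.Ico L n, m k := by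
    have : ∀ i ∈ Finset.range (m L), d i + 3
        = (L + 3) + ∑ k ∈ Finset.Ico L n, if i < m k then 1 else 0 := by
      intro i _
      simp only [d, Finset.card_filter]; ring
    rw [Finset.sum_congr rfl this, Finset.sum_add_distrib, Finset.sum_const, Finset.card_range,
      smul_eq_mul, Finset.sum_comm]
    congr 1
    refine Finset.sum_congr rfl fun k _ => ?_
    rw [← Finset.card_filter]
    have : Finset.filter (fun i => i < m k) (Finset.range (m L)) = Finset.range (m k) := by
      ext i
      have := hmM k
      simp only [Finset.mem_filter, Finset.mem_range]; omega
    rw [this, Finset.card_range]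
  have htail : ∀ K, ∑ k ∈ Finset.Ico L K, ((1:ℝ) + k) ^ (-(1 + θ)) ≤ (L:ℝ) ^ (-θ) / θ :=
    fun K => tail_sum θ hθ L K (by omega)
  have hbits2 : ((∑ i ∈ Finset.range (m L), (d i + 3) : ℕ) : ℝ) ≤ n / 4 := by
    rw [hbits]
    push_cast
    have h1 : ∑ k ∈ Finset.Ico L n, (m k : ℝ) ≤ c * n / θ := by
      calc ∑ k ∈ Finset.Ico L n, (m k : ℝ) ≤ ∑ k ∈ Finset.Ico L n, x k :=
            Finset.sum_le_sum fun k hk => hmle k (Finset.mem_Ico.1 hk).1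
        _ = X * ∑ k ∈ Finset.Ico L n, ((1:ℝ) + k) ^ (-(1 + θ)) := by rw [Finset.mul_sum]
        _ ≤ X * ((L:ℝ) ^ (-θ) / θ) := mul_le_mul_of_nonneg_left (htail n) hX0.le
        _ = c * n / θ := by
          rw [hX, Real.rpow_neg hLR.le]; field_simp
    have h2 : (m L : ℝ) * (L + 3) ≤ 4 * c * n := by
      have h3 : (m L : ℝ) ≤ c * n / (1 + L) := (hmle L le_rfl).trans (hxle L le_rfl)
      have h5 : (1:ℝ) ≤ L := by exact_mod_cast (by omega : 1 ≤ L)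
      calc (m L : ℝ) * (L + 3) ≤ c * n / (1 + L) * (L + 3) := by gcongr
        _ ≤ c * n / (1 + L) * (4 * (1 + L)) := by gcongr; linarith
        _ = 4 * c * n := by field_simp
    have h4 : 4 * c * n + c * n / θ = n / 4 := by
      have : 4 * c * n + c * n / θ = (4 * c + c / θ) * n := by ring
      rw [this, hcθ]; ring
    linarith
  have hbits3 : 4 * (∑ i ∈ Finset.range (m L), (d i + 3)) ≤ n := by
    have : (4:ℝ) * ((∑ i ∈ Finset.range (m L), (d i + 3) : ℕ) : ℝ) ≤ n := by linarith
    exact_mod_cast this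
  have hgrid : 4 * ((2 * L + 3) * 2 ^ L) ≤ n := by
    have h1 : 4 * (2 * L + 3) ≤ 2 ^ L := by
      clear_value X
      clear * - hL
      induction L, hL using Nat.le_induction with
      | base => norm_num
      | succ k hk ih => rw [pow_succ]; omega
    calc 4 * ((2 * L + 3) * 2 ^ L) = (4 * (2 * L + 3)) * 2 ^ L := by ring
      _ ≤ 2 ^ L * 2 ^ L := Nat.mul_le_mul_right _ h1
      _ = 4 ^ L := by rw [← mul_pow]; norm_num
      _ ≤ n := hn1
  refine ⟨net n L (m L) m d, ?_, ?_⟩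
  · refine (card_net n L (m L) m d).trans ?_
    have h1 : 2 * n + 1 ≤ 2 ^ (2 * L + 3) := by rw [pow_succ]; omega
    calc (2 * n + 1) ^ (2 ^ L) * 2 ^ (∑ i ∈ Finset.range (m L), (d i + 3))
        ≤ (2 ^ (2 * L + 3)) ^ (2 ^ L) * 2 ^ (∑ i ∈ Finset.range (m L), (d i + 3)) :=
          Nat.mul_le_mul_right _ (Nat.pow_le_pow_left h1 _)
      _ = 2 ^ ((2 * L + 3) * 2 ^ L + ∑ i ∈ Finset.range (m L), (d i + 3)) := by
          rw [← pow_mul, ← pow_add]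
      _ ≤ 2 ^ (n - 1) := Nat.pow_le_pow_right (by norm_num) (by
          have : 2 ≤ n := by
            have : 4 ^ 1 ≤ 4 ^ L := Nat.pow_le_pow_right (by norm_num) (by omega)
            omega
          omega)
  · intro μ hμ h1
    obtain ⟨g, hg, hK⟩ := net_approx n L n (m L) hnpos m d hmL hmM hmK hd
      (fun k => ((1:ℝ) + k) ^ (-(2 + 2 * θ))) (fun k => by positivity)
      (fun k => Real.rpow_le_one_of_one_le_of_nonpos (by
        have : (0:ℝ) ≤ k := Nat.cast_nonneg k
        linarith) (by linarith)) μ hμ h1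
    refine ⟨g, hg, fun K' => (hK K').trans ?_⟩
    have hwx : ∀ k, ((1:ℝ) + k) ^ (-(2 + 2 * θ)) / x k = ((1:ℝ) + k) ^ (-(1 + θ)) / X := by
      intro k
      have hb : (0:ℝ) < 1 + k := by positivity
      have hp := Real.rpow_pos_of_pos hb (-(1 + θ))
      rw [show -(2 + 2 * θ) = -(1 + θ) + -(1 + θ) by ring, Real.rpow_add hb]
      simp only [x]
      field_simp
    have hsum : ∀ K, ∑ k ∈ Finset.Ico L K, ((1:ℝ) + k) ^ (-(2 + 2 * θ)) / x k ≤
        (L:ℝ) ^ (-(2 * θ)) / (θ * c * n) := by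
      intro K
      simp only [hwx]
      rw [← Finset.sum_div, div_le_iff₀ hX0]
      refine (htail K).trans (le_of_eq ?_)
      rw [hX, show -(2 * θ) = -θ + -θ by ring, Real.rpow_add hLR, Real.rpow_neg hLR.le]
      field_simp
    have hw0 : ∀ k : ℕ, (0:ℝ) ≤ ((1:ℝ) + k) ^ (-(2 + 2 * θ)) := fun k => by positivity
    have hs1 : ∑ k ∈ Finset.Ico L K', ((1:ℝ) + k) ^ (-(2 + 2 * θ)) * (if m k = 0 then 1 else 0)
        ≤ (L:ℝ) ^ (-(2 * θ)) / (θ * c * n) := by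
      refine le_trans (Finset.sum_le_sum fun k hk => ?_) (hsum K')
      have hLk := (Finset.mem_Ico.1 hk).1
      have hdiv : 0 ≤ ((1:ℝ) + k) ^ (-(2 + 2 * θ)) / x k := div_nonneg (hw0 k) (hx0 k).le
      by_cases hm : m k = 0
      · have := hmlt k hLk
        rw [hm] at this
        rw [if_pos hm, mul_one, le_div_iff₀ (hx0 k)]
        refine mul_le_of_le_one_right (hw0 k) ?_
        push_cast at this
        linarith
      · rw [if_neg hm, mul_zero]; exact hdiv
    have hs2 : ∑ k ∈ Finset.Ico L n, ((1:ℝ) + k) ^ (-(2 + 2 * θ)) / m k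
        ≤ 2 * ((L:ℝ) ^ (-(2 * θ)) / (θ * c * n)) := by
      refine le_trans (Finset.sum_le_sum (g := fun k : ℕ => 2 * (((1:ℝ) + k) ^ (-(2 + 2 * θ)) / x k))
        fun k hk => ?_) ?_
      · have hLk := (Finset.mem_Ico.1 hk).1
        have hdiv : 0 ≤ ((1:ℝ) + k) ^ (-(2 + 2 * θ)) / x k := div_nonneg (hw0 k) (hx0 k).le
        by_cases hm : m k = 0
        · rw [hm]; simp only [Nat.cast_zero, div_zero]; linarith
        · have hm1 : (1:ℝ) ≤ m k := by exact_mod_cast Nat.one_le_iff_ne_zero.2 hm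
          have := hmlt k hLk
          rw [← mul_div_assoc, div_le_div_iff₀ (by linarith) (hx0 k)]
          nlinarith [hw0 k]
      · rw [← Finset.mul_sum]
        exact mul_le_mul_of_nonneg_left (hsum n) (by norm_num)
    linarith

lemma zero_cover_sum (θ : ℝ) (hθ : 0 < θ) (μ : Node → ℝ) (hμ : MemL1 μ) (h1 : l1Norm μ ≤ 1) (K : ℕ) :
    ∑ k ∈ Finset.range K, ((1:ℝ) + k) ^ (-(2 + 2 * θ)) *
      ∑ t ∈ lev k, (Vstar μ t - (fun _ => (0:ℝ)) t) ^ 2 ≤ 2 := by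
  have h2 : ∑ k ∈ Finset.range K, ((1:ℝ) + k) ^ (-(2 + 2 * θ)) *
      ∑ t ∈ lev k, (Vstar μ t - (fun _ => (0:ℝ)) t) ^ 2 ≤
      ∑ k ∈ Finset.range (K+1), ((1:ℝ) + k) ^ (-(2 + 2 * θ)) := by
    refine (Finset.sum_le_sum fun k _ => ?_).trans
      (Finset.sum_le_sum_of_subset_of_nonneg (Finset.range_subset_range.2 (Nat.le_succ K))
        fun k _ _ => by positivity)
    simp only [sub_zero]
    exact mul_le_of_le_one_right (by positivity) (sum_lev_sq μ hμ h1 k)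
  refine h2.trans ?_
  have h3 := tail_sum (1 + 2 * θ) (by linarith) 1 (K+1) le_rfl
  rw [Finset.range_eq_Ico, Finset.sum_eq_sum_Ico_succ_bot (Nat.succ_pos K)]
  have h4 : ((1:ℕ):ℝ) ^ (-(1 + 2 * θ)) / (1 + 2 * θ) ≤ 1 := by
    rw [Nat.cast_one, Real.one_rpow, div_le_one (by linarith)]; linarith
  have e : -(1 + (1 + 2 * θ)) = -(2 + 2 * θ) := by ring
  rw [e] at h3
  simp only [Nat.cast_zero, add_zero, Real.one_rpow, zero_add]
  linarith

lemma pow_vs_exp (r : ℝ) (hr : 0 < r) (L : ℕ) (hL : 1 ≤ L) :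
    1 / (2:ℝ) ^ L ≤ (r / Real.log 2) ^ r * (L:ℝ) ^ (-r) := by
  have hLR : (0:ℝ) < L := by exact_mod_cast hL
  have hl2 : 0 < Real.log 2 := Real.log_pos (by norm_num)
  have h1 : L * Real.log 2 / r ≤ Real.exp (L * Real.log 2 / r) := by
    have := Real.add_one_le_exp (L * Real.log 2 / r); linarith
  have h2 := Real.rpow_le_rpow (by positivity) h1 hr.le
  rw [← Real.exp_mul, div_mul_cancel₀ _ hr.ne', mul_comm (L:ℝ), Real.exp_mul, Real.exp_log (by norm_num),
    Real.rpow_natCast, mul_div_right_comm, Real.mul_rpow (by positivity) hLR.le] at h2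
  rw [Real.rpow_neg hLR.le, ← inv_div (Real.log 2) r, Real.inv_rpow (by positivity), ← mul_inv, one_div]
  exact inv_anti₀ (by positivity) h2

/-- Upper bound `e_n(V*) ≤ C₂ (ln n)^{1-β/2} n^{-1/2}` for `β > 2`: for every radius
`ε` exceeding the bound, the image of the unit ball of `ℓ₁(T)` under `V*` can be
covered by `2^{n-1}` balls of radius `ε` in `ℓ₂(T,W)`. -/
theorem entropy_upper_bound_regular_large_beta (β : ℝ) (hβ : 2 < β) :
    ∃ C : ℝ, 0 < C ∧ ∀ n : ℕ, 2 ≤ n →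
      ∀ ε : ℝ, C * Real.log n ^ (1 - β / 2) * (n : ℝ) ^ (-(1 : ℝ) / 2) < ε →
        ∃ N : Finset (Node → ℝ), N.card ≤ 2 ^ (n - 1) ∧
          ∀ μ : Node → ℝ, MemL1 μ → l1Norm μ ≤ 1 →
            ∃ g ∈ N, distSqW β (Vstar μ) g ≤ ENNReal.ofReal (ε ^ 2) := by
  set θ : ℝ := β / 2 - 1 with hθdef
  have hθ : 0 < θ := by rw [hθdef]; linarith
  have hβ2 : β = 2 + 2 * θ := by rw [hθdef]; ring
  have hexp : 1 - β / 2 = -θ := by rw [hθdef]; ring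
  obtain ⟨c, hc⟩ : ∃ c : ℝ, c = 1 / (4 * (1 / θ + 4)) := ⟨_, rfl⟩
  have hc0 : 0 < c := by rw [hc]; positivity
  have hl2 : 0 < Real.log 2 := Real.log_pos (by norm_num)
  set r : ℝ := 2 * θ with hr
  have hr0 : 0 < r := by rw [hr]; linarith
  set A : ℝ := ((r / Real.log 2) ^ r + 3 / (θ * c)) * 4 ^ r with hA
  set B : ℝ := 2 * 4096 * 4096 ^ r with hB
  have hA0 : 0 < A := by positivity
  have hB0 : 0 < B := by positivity
  refine ⟨Real.sqrt (A + B), Real.sqrt_pos.2 (by positivity), ?_⟩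
  intro n hn ε hε
  rw [hexp] at hε
  have hnR : (0:ℝ) < n := by exact_mod_cast (by omega : 0 < n)
  have hlog : 0 < Real.log n := Real.log_pos (by exact_mod_cast (by omega : 1 < n))
  have hε2 : (A + B) * (Real.log n ^ (-r) / n) ≤ ε ^ 2 := by
    have h0 : 0 ≤ Real.sqrt (A + B) * Real.log n ^ (-θ) * (n : ℝ) ^ (-(1 : ℝ) / 2) := by positivity
    have h1 := pow_le_pow_left₀ h0 hε.le 2
    refine le_trans (le_of_eq ?_) h1
    rw [mul_pow, mul_pow, Real.sq_sqrt (by positivity)]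
    have e1 : (Real.log n ^ (-θ)) ^ 2 = Real.log n ^ (-r) := by
      rw [← Real.rpow_natCast, ← Real.rpow_mul hlog.le]; congr 1; rw [hr]; push_cast; ring
    have e2 : ((n:ℝ) ^ (-(1 : ℝ) / 2)) ^ 2 = (n:ℝ)⁻¹ := by
      rw [← Real.rpow_natCast, ← Real.rpow_mul hnR.le, ← Real.rpow_neg_one]; congr 1; norm_num
    rw [e1, e2]; ring
  have hpos : 0 < Real.log n ^ (-r) / n := div_pos (Real.rpow_pos_of_pos hlog _) hnR
  by_cases hbig : 4096 ≤ n
  · set L := Nat.log 2 n / 2 with hLdef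
    have hl1 : 2 ^ Nat.log 2 n ≤ n := Nat.pow_log_le_self 2 (by omega)
    have hl3 : n < 2 ^ (Nat.log 2 n + 1) := Nat.lt_pow_succ_log_self (by norm_num) n
    have hlog12 : 12 ≤ Nat.log 2 n := by
      have : (2:ℕ) ^ 12 < 2 ^ (Nat.log 2 n + 1) := lt_of_le_of_lt (by norm_num; exact hbig) hl3
      have := (Nat.pow_lt_pow_iff_right (by norm_num : 1 < 2)).1 this
      omega
    have hL6 : 6 ≤ L := by omega
    have hn1 : 4 ^ L ≤ n := by
      have : (4:ℕ) ^ L = 2 ^ (2 * L) := by rw [pow_mul]; norm_num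
      rw [this]
      exact (Nat.pow_le_pow_right (by norm_num) (by omega)).trans hl1
    have hn2 : n < 2 ^ (2 * L + 2) :=
      lt_of_lt_of_le hl3 (Nat.pow_le_pow_right (by norm_num) (by omega))
    have hLR : (0:ℝ) < L := by exact_mod_cast (by omega : 0 < L)
    obtain ⟨N, hN, happ⟩ := big_case θ hθ n L hL6 hn1 hn2 c hc
    refine ⟨N, hN, fun μ hμ h1 => ?_⟩
    obtain ⟨g, hg, hK⟩ := happ μ hμ h1
    refine ⟨g, hg, distSq_le β _ _ _ fun K => ?_⟩
    rw [hβ2]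
    refine (hK K).trans (le_trans ?_ hε2)
    have hLlog : Real.log n / 4 ≤ L := by
      have h2 : (n:ℝ) ≤ 2 ^ (2 * L + 2) := by exact_mod_cast hn2.le
      have h3 := Real.log_le_log hnR h2
      rw [Real.log_pow] at h3
      push_cast at h3
      have h4 : Real.log 2 ≤ 1 := by have := Real.log_two_lt_d9; linarith
      have h5 : (1:ℝ) ≤ L := by exact_mod_cast (by omega : 1 ≤ L)
      nlinarith
    have hLpow : (L:ℝ) ^ (-r) ≤ 4 ^ r * Real.log n ^ (-r) := by
      have := Real.rpow_le_rpow_of_nonpos (by positivity) hLlog (by linarith : -r ≤ 0)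
      refine this.trans (le_of_eq ?_)
      rw [Real.div_rpow hlog.le (by norm_num), Real.rpow_neg (by norm_num : (0:ℝ) ≤ 4)]
      field_simp
    have hfirst : (2:ℝ) ^ L / (n:ℝ) ^ 2 ≤ (r / Real.log 2) ^ r * (L:ℝ) ^ (-r) / n := by
      have h2 := pow_vs_exp r hr0 L (by omega)
      have h3 : (2:ℝ) ^ L / n ≤ 1 / 2 ^ L := by
        rw [div_le_div_iff₀ hnR (by positivity), ← mul_pow]
        have : ((4:ℕ):ℝ) ^ L ≤ n := by exact_mod_cast hn1
        norm_num at this ⊢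
        exact this
      calc (2:ℝ) ^ L / (n:ℝ) ^ 2 = (2 ^ L / n) / n := by rw [sq, div_div]
        _ ≤ _ := div_le_div_of_nonneg_right (h3.trans h2) hnR.le
    calc (2:ℝ) ^ L / (n:ℝ) ^ 2 + 3 * ((L:ℝ) ^ (-r) / (θ * c * n))
        ≤ (r / Real.log 2) ^ r * (L:ℝ) ^ (-r) / n + 3 * ((L:ℝ) ^ (-r) / (θ * c * n)) := by linarith
      _ = ((r / Real.log 2) ^ r + 3 / (θ * c)) * ((L:ℝ) ^ (-r) / n) := by field_simp
      _ ≤ ((r / Real.log 2) ^ r + 3 / (θ * c)) * (4 ^ r * Real.log n ^ (-r) / n) := by gcongr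
      _ = A * (Real.log n ^ (-r) / n) := by rw [hA]; ring
      _ ≤ (A + B) * (Real.log n ^ (-r) / n) := by gcongr; linarith
  · refine ⟨{fun _ => 0}, ?_, fun μ hμ h1 => ⟨_, Finset.mem_singleton_self _, ?_⟩⟩
    · rw [Finset.card_singleton]; exact Nat.one_le_two_pow
    · refine distSq_le β _ _ _ fun K => ?_
      rw [hβ2]
      refine (zero_cover_sum θ hθ μ hμ h1 K).trans (le_trans ?_ hε2)
      have hn' : (n:ℝ) ≤ 4096 := by exact_mod_cast (by omega : n ≤ 4096)
      have h2 : Real.log n ≤ 4096 := by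
        have := Real.log_le_sub_one_of_pos hnR
        linarith
      have h3 : (4096:ℝ) ^ (-r) ≤ Real.log n ^ (-r) :=
        Real.rpow_le_rpow_of_nonpos hlog h2 (by linarith)
      have h4 : (4096:ℝ) ^ (-r) / 4096 ≤ Real.log n ^ (-r) / n := by gcongr
      have h5 : B * ((4096:ℝ) ^ (-r) / 4096) = 2 := by
        rw [hB, Real.rpow_neg (by norm_num)]; field_simp
      have h6 := mul_le_mul_of_nonneg_left h4 hB0.le
      nlinarith [mul_pos hA0 hpos]
end

section
/- Let T be the infinite binary tree with the critical weight w(t) = (1+|t|)^{-2}, and let V : ℓ₂(T,W) → ℓ∞(T) be the operator (Vf)(t) = Σ_{u ⪯ t} w(u) f(u), where the sum is over the nodes u on the branch from the root to t (u a prefix of t, including u = t). Then there exists a numerical constant C such that for all positive integers n, e_n(V) ≤ C · n^{-1/2}. -/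
open scoped ENNReal

/-- The tree summation operator `(Vf)(t) = Σ_{u ⪯ t} w(u) f(u)`, where the sum runs
over the (finitely many) prefixes `u = t.take l`, `l = 0, …, |t|`, of `t`. -/
noncomputable def Vop (w : Node → ℝ) (f : Node → ℝ) (t : Node) : ℝ :=
  ∑ l ∈ Finset.range (t.length + 1), w (t.take l) * f (t.take l)

namespace TreeEnt

/-- weighted path sum, the root of the tree sitting at level `k` -/
noncomputable def T : ℕ → (Node → ℝ) → Node → ℝ
  | k, y, [] => y [] / (1 + k)
  | k, y, b :: r => y [] / (1 + k) + T (k + 1) (fun c => y (b :: c)) r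

/-- path energy -/
noncomputable def P : (Node → ℝ) → Node → ℝ
  | y, [] => y [] ^ 2
  | y, b :: r => y [] ^ 2 + P (fun c => y (b :: c)) r

/-- decode: the value at the longest coded prefix -/
def dec {α : Type} : (Node → Option α) → Node → Option α
  | Q, [] => Q []
  | Q, b :: r => (dec (fun c => Q (b :: c)) r).or (Q [])

def rootCost {α : Type} (k : ℕ) (o : Option α) : ℕ := if o.isSome then k + 1 else 0

def cost {α : Type} : ℕ → ℕ → (Node → Option α) → ℕ
  | 0, k, Q => rootCost k (Q [])
  | h + 1, k, Q => rootCost k (Q []) + cost h (k + 1) (fun c => Q (true :: c))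
      + cost h (k + 1) (fun c => Q (false :: c))

def setRoot {α : Type} (v : α) (Q : Node → Option α) : Node → Option α
  | [] => some v
  | b :: c => Q (b :: c)

def mk {α : Type} (Q : Bool → Node → Option α) : Node → Option α
  | [] => none
  | b :: c => Q b c

lemma P_nonneg (r : Node) : ∀ y : Node → ℝ, 0 ≤ P y r := by
  induction r with
  | nil => intro y; simp only [P]; positivity
  | cons b r ih => intro y; simp only [P]; have := ih (fun c => y (b :: c)); positivity

lemma T_sq (r : Node) : ∀ (k : ℕ) (y : Node → ℝ), T k y r ^ 2 ≤ P y r * (2 / (1 + k)) := by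
  induction r with
  | nil =>
    intro k y
    simp only [T, P]
    have hk : (0 : ℝ) < 1 + k := by positivity
    have hk0 : (0 : ℝ) ≤ k := by positivity
    rw [div_pow, div_eq_mul_inv]
    apply mul_le_mul_of_nonneg_left _ (by positivity)
    rw [inv_eq_one_div, div_le_div_iff₀ (by positivity) hk]
    nlinarith
  | cons b r ih =>
    intro k y
    have h := ih (k + 1) (fun c => y (b :: c))
    have hP := P_nonneg r (fun c => y (b :: c))
    simp only [T, P]
    set t := T (k + 1) (fun c => y (b :: c)) r
    set p := P (fun c => y (b :: c)) r
    set a := y []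
    push_cast at h
    have hk0 : (0 : ℝ) ≤ k := by positivity
    set u : ℝ := 1 / (1 + k) with hu
    set W : ℝ := 2 / (1 + (k + 1)) with hW
    have hWpos : 0 < W := by rw [hW]; positivity
    have hWle : u ^ 2 + W ≤ 2 / (1 + k) := by
      rw [hu, hW, div_pow, div_add_div _ _ (by positivity) (by positivity),
        div_le_div_iff₀ (by positivity) (by positivity)]
      nlinarith [mul_nonneg hk0 hk0, mul_nonneg (mul_nonneg hk0 hk0) hk0]
    have e1 : a / (1 + k) = a * u := by rw [hu]; ring
    rw [e1]
    have key : (a * u + t) ^ 2 ≤ (a ^ 2 + p) * (u ^ 2 + W) := by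
      have h2 : 2 * (a * u * t) ≤ a ^ 2 * W + p * u ^ 2 := by
        have h3 : u ^ 2 * t ^ 2 ≤ u ^ 2 * (p * W) := mul_le_mul_of_nonneg_left h (by positivity)
        have h4 : (a * W - u * t) ^ 2 ≥ 0 := sq_nonneg _
        have h5 : W * (2 * (a * u * t)) ≤ W * (a ^ 2 * W + p * u ^ 2) := by nlinarith
        exact le_of_mul_le_mul_left h5 hWpos
      nlinarith
    exact key.trans (mul_le_mul_of_nonneg_left hWle (by positivity))

def Super (y E : Node → ℝ) : Prop :=
  (∀ c, 0 ≤ E c) ∧ ∀ c, y c ^ 2 + E (c ++ [true]) + E (c ++ [false]) ≤ E c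

lemma Super.child {y E : Node → ℝ} (h : Super y E) (b : Bool) :
    Super (fun c => y (b :: c)) (fun c => E (b :: c)) :=
  ⟨fun c => h.1 _, fun c => h.2 (b :: c)⟩

lemma Super.root {y E : Node → ℝ} (h : Super y E) :
    y [] ^ 2 + E [true] + E [false] ≤ E [] := h.2 []

lemma Super.child_le {y E : Node → ℝ} (h : Super y E) (b : Bool) :
    y [] ^ 2 + E [b] ≤ E [] := by
  have := h.root
  have h1 := h.1 [true]
  have h2 := h.1 [false]
  cases b <;> linarith

lemma P_le (r : Node) : ∀ y E : Node → ℝ, Super y E → P y r ≤ E [] := by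
  induction r with
  | nil =>
    intro y E h
    have := h.child_le true
    have h1 := h.1 [true]
    simp only [P]; linarith
  | cons b r ih =>
    intro y E h
    have h1 := ih _ _ (h.child b)
    have := h.child_le b
    simp only [P]; linarith

lemma dec_none {α : Type} (r : Node) : dec (fun _ => (none : Option α)) r = none := by
  induction r with
  | nil => rfl
  | cons b r ih => simp [dec, ih]

lemma cost_none {α : Type} (h : ℕ) : ∀ k, cost h k (fun _ => (none : Option α)) = 0 := by
  induction h with
  | zero => intro k; simp [cost, rootCost]
  | succ h ih => intro k; simp [cost, rootCost, ih]

lemma dec_setRoot {α : Type} (v : α) (Q : Node → Option α) (hQ : Q [] = none) (r : Node) :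
    dec (setRoot v Q) r = (dec Q r).or (some v) := by
  cases r with
  | nil => simp [dec, setRoot, hQ]
  | cons b r => simp [dec, setRoot, hQ]

lemma cost_setRoot {α : Type} (v : α) (Q : Node → Option α) (hQ : Q [] = none) (h k : ℕ) :
    cost h k (setRoot v Q) = cost h k Q + (k + 1) := by
  cases h with
  | zero => simp [cost, setRoot, rootCost, hQ]
  | succ h => simp [cost, setRoot, rootCost, hQ]; ring

/-- uncut version -/
def PA (δ : ℝ) (h k : ℕ) (y E : Node → ℝ) (σ : ℝ) : Prop :=
  ∃ (Q : Node → Option ℝ) (e : ℝ), 0 ≤ e ∧ Q [] = none ∧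
    (∀ c, Q c = none ∨ Q c = some (σ + T k y c)) ∧ (∀ c, h < c.length → Q c = none) ∧
    δ ^ 2 / 2 * cost h k Q + e ≤ E [] ∧
    ∀ r, (dec Q r = none ∧ P y r ≤ e ∧ |T k y r - y [] / (1 + k)| ≤ δ) ∨
      ∃ v, dec Q r = some v ∧ |σ + T k y r - v| ≤ δ

/-- version after deciding whether to cut at the root -/
def PB (δ : ℝ) (h k : ℕ) (y E : Node → ℝ) (σ : ℝ) : Prop :=
  ∃ (Q : Node → Option ℝ) (e : ℝ), 0 ≤ e ∧
    (∀ c, Q c = none ∨ Q c = some (σ + T k y c)) ∧ (∀ c, h < c.length → Q c = none) ∧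
    δ ^ 2 / 2 * cost h k Q + e ≤ E [] ∧
    ∀ r, (dec Q r = none ∧ P y r ≤ e ∧ |T k y r| ≤ δ) ∨
      ∃ v, dec Q r = some v ∧ |σ + T k y r - v| ≤ δ

lemma PA_to_PB {δ : ℝ} (hδ : 0 < δ) {h k : ℕ} {y E : Node → ℝ} {σ : ℝ}
    (hA : PA δ h k y E σ) : PB δ h k y E σ := by
  obtain ⟨Q, e, he, hQ0, hQv, hQs, hc, hr⟩ := hA
  by_cases hcut : ∃ r, dec Q r = none ∧ P y r ≤ e ∧ δ < |T k y r|
  · obtain ⟨r, -, hP, hT⟩ := hcut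
    refine ⟨setRoot (σ + T k y []) Q, 0, le_rfl, ?_, ?_, ?_, ?_⟩
    · intro c
      cases c with
      | nil => right; rfl
      | cons b c => exact hQv (b :: c)
    · intro c hc
      cases c with
      | nil => simp at hc
      | cons b c => exact hQs (b :: c) hc
    · rw [cost_setRoot _ _ hQ0]
      push_cast
      have h1 := T_sq r k y
      have h2 : δ ^ 2 ≤ T k y r ^ 2 := by
        rw [← sq_abs (T k y r)]
        exact pow_le_pow_left₀ hδ.le hT.le 2
      have h3 : δ ^ 2 ≤ e * (2 / (1 + k)) :=
        h2.trans (h1.trans (mul_le_mul_of_nonneg_right hP (by positivity)))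
      have h4 : δ ^ 2 * (1 + k) ≤ e * 2 := by
        have hk : (0 : ℝ) < 1 + k := by positivity
        rw [← mul_div_assoc, le_div_iff₀ hk] at h3
        exact h3
      linarith
    · intro r
      right
      rw [dec_setRoot _ _ hQ0]
      rcases hr r with ⟨h1, h2, h3⟩ | ⟨v, h1, h2⟩
      · refine ⟨_, by rw [h1]; rfl, ?_⟩
        simp only [T]
        convert h3 using 2
        ring
      · exact ⟨v, by rw [h1]; rfl, h2⟩
  · push Not at hcut
    refine ⟨Q, e, he, hQv, hQs, hc, fun r => ?_⟩
    rcases hr r with ⟨h1, h2, h3⟩ | h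
    · exact Or.inl ⟨h1, h2, hcut r h1 h2⟩
    · exact Or.inr h

lemma PA_all {δ : ℝ} (hδ : 0 < δ) {Λ : ℕ} (hΛ : 2 / ((Λ : ℝ) + 2) ≤ δ ^ 2) (h : ℕ) :
    ∀ k, k + h = Λ → ∀ y E : Node → ℝ, Super y E → E [] ≤ 1 → ∀ σ, PA δ h k y E σ := by
  induction h with
  | zero =>
    intro k hk y E hS hE σ
    refine ⟨fun _ => none, E [], hS.1 _, rfl, fun _ => Or.inl rfl, fun _ _ => rfl, ?_, ?_⟩
    · rw [cost_none]; simp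
    · intro r
      left
      refine ⟨dec_none r, P_le r _ _ hS, ?_⟩
      cases r with
      | nil => simp [T, hδ.le]
      | cons b r =>
        simp only [T, add_sub_cancel_left]
        have h1 := T_sq r (k + 1) (fun c => y (b :: c))
        have h2 := P_le r _ _ (hS.child b)
        have h3 := hS.child_le b
        have h4 : P (fun c => y (b :: c)) r ≤ 1 := by nlinarith [sq_nonneg (y [])]
        have h5 : (2 : ℝ) / (1 + ((k + 1 : ℕ) : ℝ)) ≤ δ ^ 2 := by
          convert hΛ using 2
          rw [← hk]; push_cast; ring
        apply abs_le_of_sq_le_sq _ hδ.le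
        refine h1.trans (le_trans ?_ h5)
        exact mul_le_of_le_one_left (by positivity) h4
  | succ h ih =>
    intro k hk y E hS hE σ
    have hB : ∀ b : Bool, PB δ h (k + 1) (fun c => y (b :: c)) (fun c => E (b :: c))
        (σ + y [] / (1 + k)) := by
      intro b
      apply PA_to_PB hδ
      apply ih (k + 1) (by omega) _ _ (hS.child b)
      have := hS.child_le b
      nlinarith [sq_nonneg (y [])]
    choose Q e he hQv hQs hc hr using hB
    refine ⟨mk Q, y [] ^ 2 + e true + e false, ?_, rfl, ?_, ?_, ?_, ?_⟩
    · have := he true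
      have := he false
      positivity
    · intro c
      cases c with
      | nil => left; rfl
      | cons b c =>
        have := hQv b c
        simp only [T, mk]
        rwa [add_assoc] at this
    · intro c hc
      cases c with
      | nil => rfl
      | cons b c => exact hQs b c (by simpa using hc)
    · have h1 := hc true
      have h2 := hc false
      have h3 := hS.root
      have h4 : cost (h + 1) k (mk Q) = cost h (k + 1) (Q true) + cost h (k + 1) (Q false) := by
        simp [cost, mk, rootCost]
      rw [h4]
      push_cast
      linarith
    · intro r
      cases r with
      | nil =>
        left
        refine ⟨rfl, ?_, ?_⟩
        · have := he true
          have := he false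
          simp only [P]; linarith
        · simp [T, hδ.le]
      | cons b r =>
        have hd : dec (mk Q) (b :: r) = dec (Q b) r := by simp [dec, mk]
        rw [hd]
        rcases hr b r with ⟨h1, h2, h3⟩ | ⟨v, h1, h2⟩
        · left
          refine ⟨h1, ?_, ?_⟩
          · have := he true
            have := he false
            simp only [P]
            cases b <;> linarith
          · simpa only [T, add_sub_cancel_left] using h3
        · right
          refine ⟨v, h1, ?_⟩
          simp only [T]
          rwa [← add_assoc]

/-! Counting -/

def F : ℕ → Finset Node
  | 0 => {[]}
  | h + 1 => insert [] ((F h).image (List.cons true) ∪ (F h).image (List.cons false))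

lemma mem_F (h : ℕ) : ∀ c : Node, c ∈ F h ↔ c.length ≤ h := by
  induction h with
  | zero => intro c; simp [F]
  | succ h ih =>
    intro c
    cases c with
    | nil => simp [F]
    | cons b c => cases b <;> simp [F, ih]

lemma sum_F {M : Type} [AddCommMonoid M] (φ : Node → M) (h : ℕ) :
    ∑ c ∈ F (h + 1), φ c = φ [] + (∑ c ∈ F h, φ (true :: c) + ∑ c ∈ F h, φ (false :: c)) := by
  rw [F, Finset.sum_insert (by simp), Finset.sum_union, Finset.sum_image, Finset.sum_image]
  · intro a _ b _ h; simpa using h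
  · intro a _ b _ h; simpa using h
  · rw [Finset.disjoint_left]
    intro c h1 h2
    simp only [Finset.mem_image] at h1 h2
    obtain ⟨a, _, rfl⟩ := h1
    obtain ⟨b, _, hb⟩ := h2
    simp at hb

lemma cost_eq {α : Type} (h : ℕ) : ∀ (k : ℕ) (Q : Node → Option α),
    cost h k Q = ∑ c ∈ F h, rootCost (k + c.length) (Q c) := by
  induction h with
  | zero => intro k Q; simp [F, cost]
  | succ h ih =>
    intro k Q
    rw [sum_F, cost, ih, ih]
    simp only [List.length_cons, List.length_nil, add_zero]
    simp only [add_assoc, add_comm 1]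

lemma sum_quarter (h : ℕ) : ∑ c ∈ F h, (1 / 4 : ℝ) ^ (c.length + 1) ≤ 1 / 2 := by
  induction h with
  | zero => simp [F]; norm_num
  | succ h ih =>
    rw [sum_F]
    simp only [List.length_cons, List.length_nil]
    have : ∀ c : Node, (1 / 4 : ℝ) ^ (c.length + 1 + 1) = (1 / 4) * (1 / 4) ^ (c.length + 1) :=
      fun c => by ring
    simp only [this, ← Finset.mul_sum]
    norm_num at ih ⊢
    linarith

def ext {h : ℕ} (p : F h → Option ℤ) (c : Node) : Option ℤ :=
  if hc : c ∈ F h then p ⟨c, hc⟩ else none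

noncomputable def box (h M : ℕ) : Finset (F h → Option ℤ) :=
  Fintype.piFinset fun _ => Finset.insertNone (Finset.Icc (-(M : ℤ)) M)

lemma count (h M b : ℕ) :
    (((box h M).filter fun p => cost h 0 (ext p) ≤ b).card : ℝ) ≤ 2 ^ (2 * b + (2 * M + 1)) := by
  have hcost : ∀ p : F h → Option ℤ,
      cost h 0 (ext p) = ∑ c : F h, rootCost c.1.length (p c) := by
    intro p
    rw [cost_eq, ← Finset.sum_coe_sort]
    apply Finset.sum_congr rfl
    intro c _
    simp [ext]
  have h1 : (((box h M).filter fun p => cost h 0 (ext p) ≤ b).card : ℝ) * (1 / 4) ^ b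
      ≤ ∑ p ∈ box h M, ∏ c : F h, (1 / 4 : ℝ) ^ rootCost c.1.length (p c) := by
    rw [← nsmul_eq_mul, ← Finset.sum_const]
    refine le_trans (Finset.sum_le_sum ?_)
      (Finset.sum_le_sum_of_subset_of_nonneg (Finset.filter_subset _ _) ?_)
    · intro p hp
      rw [Finset.prod_pow_eq_pow_sum, ← hcost]
      exact pow_le_pow_of_le_one (by norm_num) (by norm_num) (Finset.mem_filter.1 hp).2
    · intro p _ _
      positivity
  have h2 : ∑ p ∈ box h M, ∏ c : F h, (1 / 4 : ℝ) ^ rootCost c.1.length (p c)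
      ≤ Real.exp ((2 * M + 1 : ℕ) * (1 / 2)) := by
    unfold box
    rw [← Finset.prod_univ_sum (fun _ => Finset.insertNone (Finset.Icc (-(M : ℤ)) M))
      (fun (c : F h) (o : Option ℤ) => (1 / 4 : ℝ) ^ rootCost c.1.length o)]
    have h3 : ∀ c : F h, ∑ o ∈ Finset.insertNone (Finset.Icc (-(M : ℤ)) M),
        (1 / 4 : ℝ) ^ rootCost c.1.length o
        ≤ Real.exp ((2 * M + 1 : ℕ) * (1 / 4) ^ (c.1.length + 1)) := by
      intro c
      rw [Finset.sum_insertNone]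
      simp only [rootCost, Option.isSome_none, Option.isSome_some, if_true, Finset.sum_const,
        Int.card_Icc]
      have : ((M : ℤ) + 1 - -(M : ℤ)).toNat = 2 * M + 1 := by omega
      rw [this, nsmul_eq_mul]
      have := Real.add_one_le_exp (((2 * M + 1 : ℕ) : ℝ) * (1 / 4) ^ (c.1.length + 1))
      simp
      simp at this
      linarith
    refine (Finset.prod_le_prod (fun c _ => Finset.sum_nonneg fun _ _ => by positivity)
      (fun c _ => h3 c)).trans ?_
    rw [← Real.exp_sum, ← Finset.mul_sum,
      Finset.sum_coe_sort (F h) (fun c : Node => (1 / 4 : ℝ) ^ (c.length + 1))]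
    exact Real.exp_le_exp.2 (mul_le_mul_of_nonneg_left (sum_quarter h) (by positivity))
  have h4 : Real.exp ((2 * M + 1 : ℕ) * (1 / 2)) ≤ 2 ^ (2 * M + 1) := by
    rw [Real.exp_nat_mul]
    apply pow_le_pow_left₀ (Real.exp_pos _).le
    have : Real.exp (1 / 2) ^ 2 ≤ 2 ^ 2 := by
      rw [← Real.exp_nat_mul]
      have := Real.exp_one_lt_d9
      norm_num
      linarith
    exact le_of_sq_le_sq this (by norm_num)
  have h5 := h1.trans (h2.trans h4)
  rw [pow_add, pow_mul]
  have h6 : (0 : ℝ) < (1 / 4) ^ b := by positivity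
  rw [← div_le_iff₀' (by positivity)]
  calc _ = _ * (1 / 4 : ℝ) ^ b := by rw [one_div, inv_pow]; norm_num; rfl
    _ ≤ _ := h5

lemma dec_map {α β : Type} (ρ : α → β) (r : Node) : ∀ Q : Node → Option α,
    dec (fun c => (Q c).map ρ) r = (dec Q r).map ρ := by
  induction r with
  | nil => intro Q; rfl
  | cons b r ih =>
    intro Q
    simp only [dec]
    rw [ih (fun c => Q (b :: c))]
    cases dec (fun c => Q (b :: c)) r <;> simp

lemma rootCost_map {α β : Type} (ρ : α → β) (k : ℕ) (o : Option α) :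
    rootCost k (o.map ρ) = rootCost k o := by
  simp [rootCost]

/-! Linking to the operator -/

lemma sum_take_eq (t : Node) : ∀ (k : ℕ) (y : Node → ℝ),
    ∑ l ∈ Finset.range (t.length + 1), y (t.take l) / (1 + k + (t.take l).length) = T k y t := by
  induction t with
  | nil => intro k y; simp [T]
  | cons b t ih =>
    intro k y
    rw [List.length_cons, Finset.sum_range_succ']
    simp only [List.take_succ_cons, List.take_zero, List.length_nil, T, List.length_cons]
    rw [← ih (k + 1) (fun c => y (b :: c)), add_comm]
    congr 1
    · simp
    · apply Finset.sum_congr rfl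
      intro l _
      congr 1
      push_cast; ring

lemma wgt_two (t : Node) : wgt 2 t = 1 / (1 + t.length) ^ 2 := by
  unfold wgt
  rw [Real.rpow_neg (by positivity)]
  norm_num

lemma Vop_eq (f : Node → ℝ) (t : Node) :
    Vop (wgt 2) f t = T 0 (fun c => f c / (1 + c.length)) t := by
  rw [← sum_take_eq]
  unfold Vop
  apply Finset.sum_congr rfl
  intro l _
  rw [wgt_two]
  simp only [Nat.cast_zero, add_zero]
  field_simp

lemma tsum_split (φ : Node → ℝ≥0∞) :
    φ [] + ((∑' r, φ (true :: r)) + ∑' r, φ (false :: r)) ≤ ∑' r, φ r := by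
  have hinj : Function.Injective (fun p : Bool × Node => (p.1 :: p.2 : Node)) := by
    rintro ⟨a, r⟩ ⟨b, s⟩ h
    simpa using h
  have h := ENNReal.tsum_comp_le_tsum_of_injective hinj (fun r => if r = [] then 0 else φ r)
  rw [ENNReal.tsum_prod', tsum_bool] at h
  have h2 : ∑' r, φ r = φ [] + ∑' r, (if r = [] then 0 else φ r) := by
    rw [ENNReal.tsum_eq_add_tsum_ite (f := φ) []]
    congr 1
    apply tsum_congr
    intro r
    split_ifs <;> rfl
  rw [h2]
  apply add_le_add le_rfl
  rw [add_comm]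
  simpa only [reduceCtorEq, if_false] using h

lemma exists_super (f : Node → ℝ)
    (hf : (∑' t : Node, ENNReal.ofReal (wgt 2 t * f t ^ 2)) ≤ 1) :
    ∃ E, Super (fun c => f c / (1 + c.length)) E ∧ E [] ≤ 1 := by
  set φ : Node → ℝ≥0∞ := fun t => ENNReal.ofReal (wgt 2 t * f t ^ 2) with hφ
  have hfin : ∀ s : Node, ∑' r, φ (s ++ r) ≤ 1 := fun s =>
    (ENNReal.tsum_comp_le_tsum_of_injective (List.append_right_injective s) φ).trans hf
  have hne : ∀ s : Node, ∑' r, φ (s ++ r) ≠ ∞ := fun s =>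
    ne_top_of_le_ne_top ENNReal.one_ne_top (hfin s)
  refine ⟨fun s => (∑' r, φ (s ++ r)).toReal, ⟨fun c => ENNReal.toReal_nonneg, ?_⟩, ?_⟩
  · intro c
    have h := tsum_split (fun r => φ (c ++ r))
    have h' := ENNReal.toReal_mono (hne c) h
    have e : ∀ b : Bool, ∑' r, φ (c ++ b :: r) = ∑' r, φ ((c ++ [b]) ++ r) := by
      intro b; simp
    rw [e, e, ENNReal.toReal_add (by simp [hφ]) (ENNReal.add_ne_top.2 ⟨hne _, hne _⟩),
      ENNReal.toReal_add (hne _) (hne _)] at h'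
    have e2 : (φ (c ++ [])).toReal = (f c / (1 + c.length)) ^ 2 := by
      rw [List.append_nil, hφ]
      simp only
      rw [wgt_two, ENNReal.toReal_ofReal (by positivity)]
      field_simp
    rw [e2] at h'
    linarith
  · have := ENNReal.toReal_mono ENNReal.one_ne_top (hfin [])
    simpa using this

lemma T_bound {y E : Node → ℝ} (hS : Super y E) (hE : E [] ≤ 1) (t : Node) :
    |T 0 y t| ≤ 2 := by
  have h1 := T_sq t 0 y
  have h2 := P_le t _ _ hS
  apply abs_le_of_sq_le_sq _ (by norm_num)
  norm_num at h1
  linarith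

lemma cover (n : ℕ) (hn : 100 < n) :
    ∃ N : Finset (Node → ℝ), N.card ≤ 2 ^ (n - 1) ∧
      ∀ f : Node → ℝ, (∑' t : Node, ENNReal.ofReal (wgt 2 t * f t ^ 2)) ≤ 1 →
        ∃ g ∈ N, ∀ t : Node, |Vop (wgt 2) f t - g t| ≤ 20 / √n := by
  classical
  set δ : ℝ := 10 / √n with hδdef
  have hn0 : (100 : ℝ) < n := by exact_mod_cast hn
  have hsq : √(n : ℝ) ^ 2 = n := Real.sq_sqrt (by positivity)
  have hs10 : 10 < √(n : ℝ) := by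
    apply Real.lt_sqrt_of_sq_lt; norm_num; exact hn
  have hδ : 0 < δ := by rw [hδdef]; positivity
  have hδ2 : δ ^ 2 = 100 / n := by rw [hδdef, div_pow, hsq]; norm_num
  set m := n / 50 with hm
  have hmn : (n : ℝ) / 50 < m + 1 := by
    have : n < 50 * (m + 1) := by omega
    have : (n : ℝ) < 50 * (m + 1) := by exact_mod_cast this
    linarith
  set M := m + 2 with hM
  let D : (F n → Option ℤ) → Node → ℝ := fun p t => (dec (ext p) t).elim 0 (fun z => δ * z)
  refine ⟨((box n M).filter fun p => cost n 0 (ext p) ≤ m).image D, ?_, ?_⟩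
  · refine Finset.card_image_le.trans ?_
    have h1 := count n M m
    have h2 : ((box n M).filter fun p => cost n 0 (ext p) ≤ m).card ≤ 2 ^ (2 * m + (2 * M + 1)) := by
      exact_mod_cast h1
    exact h2.trans (Nat.pow_le_pow_right (by norm_num) (by omega))
  · intro f hf
    obtain ⟨E, hS, hE⟩ := exists_super f hf
    set y : Node → ℝ := fun c => f c / (1 + c.length) with hy
    have hΛ : 2 / ((n : ℝ) + 2) ≤ δ ^ 2 := by
      rw [hδ2, div_le_div_iff₀ (by positivity) (by positivity)]
      linarith
    obtain ⟨Q, e, he, hQv, hQs, hc, hr⟩ :=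
      PA_to_PB hδ (PA_all hδ hΛ n 0 (by omega) y E hS hE 0)
    let ρ : ℝ → ℤ := fun v => round (v / δ)
    let p : F n → Option ℤ := fun c => (Q c.1).map ρ
    have hext : ext p = fun c => (Q c).map ρ := by
      funext c
      unfold ext
      split_ifs with hcF
      · rfl
      · rw [mem_F, not_le] at hcF
        rw [hQs c hcF]; rfl
    refine ⟨D p, ?_, ?_⟩
    · apply Finset.mem_image_of_mem
      rw [Finset.mem_filter]
      constructor
      · unfold box
        rw [Fintype.mem_piFinset]
        intro c
        rcases hQv c.1 with h | h
        · simp [p, h]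
        · simp only [p, h, Option.map_some, Finset.some_mem_insertNone, Finset.mem_Icc, zero_add]
          rw [← abs_le]
          have hb := T_bound hS hE c.1
          have h1 : |T 0 y c.1 / δ| ≤ n / 50 := by
            rw [abs_div, abs_of_pos hδ, div_le_iff₀ hδ, hδdef]
            refine hb.trans ?_
            have : (n : ℝ) / 50 * (10 / √n) = √n / 5 := by
              field_simp; rw [hsq]; ring
            rw [this]; linarith
          have h2 := abs_sub_round (T 0 y c.1 / δ)
          have h3 : |((round (T 0 y c.1 / δ) : ℤ) : ℝ)| < M + 1 := by
            rw [hM]; push_cast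
            rw [abs_le] at h1 h2
            rw [abs_lt]
            constructor <;> linarith
          have h4 : |round (T 0 y c.1 / δ)| < (M : ℤ) + 1 := by exact_mod_cast h3
          show |round (T 0 y c.1 / δ)| ≤ (M : ℤ)
          omega
      · have h1 : cost n 0 (ext p) = cost n 0 Q := by
          rw [hext, cost_eq, cost_eq]
          simp only [rootCost_map]
        rw [h1]
        have h2 : δ ^ 2 / 2 * cost n 0 Q ≤ 1 := by linarith
        rw [hδ2] at h2
        have h3 : (cost n 0 Q : ℝ) < (m : ℝ) + 1 := by
          refine lt_of_le_of_lt ?_ hmn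
          field_simp at h2
          linarith
        have h4 : cost n 0 Q < m + 1 := by exact_mod_cast h3
        omega
    · intro t
      rw [Vop_eq]
      have h20 : 20 / √(n : ℝ) = 2 * δ := by rw [hδdef]; ring
      rw [h20]
      simp only [D]
      rw [hext, dec_map]
      rcases hr t with ⟨h1, h2, h3⟩ | ⟨v, h1, h2⟩
      · rw [h1]
        simp only [Option.map_none, Option.elim_none, sub_zero]
        linarith
      · rw [h1]
        simp only [Option.map_some, Option.elim_some, ρ]
        rw [zero_add] at h2
        have h3 := abs_sub_round (v / δ)
        have h4 : |v - δ * round (v / δ)| ≤ δ := by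
          have : v - δ * round (v / δ) = δ * (v / δ - round (v / δ)) := by field_simp
          rw [this, abs_mul, abs_of_pos hδ]
          nlinarith
        have := abs_sub_le (T 0 y t) v (δ * round (v / δ))
        linarith

end TreeEnt

/-- Critical case `β = 2`: upper bound `e_n(V) ≤ C n^{-1/2}` for the operator
`V : ℓ₂(T,W) → ℓ∞(T)` with weight `w(t) = (1+|t|)^{-2}`: for every radius `ε`
exceeding the bound, the image of the unit ball of `ℓ₂(T,W)` under `V` can be
covered by `2^{n-1}` balls of radius `ε` in the supremum norm of `ℓ∞(T)`. -/
theorem entropy_upper_bound_critical_V :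
    ∃ C : ℝ, 0 < C ∧ ∀ n : ℕ, 0 < n → ∀ ε : ℝ, C * (n : ℝ) ^ (-(1 : ℝ) / 2) < ε →
      ∃ N : Finset (Node → ℝ), N.card ≤ 2 ^ (n - 1) ∧
        ∀ f : Node → ℝ, (∑' t : Node, ENNReal.ofReal (wgt 2 t * f t ^ 2)) ≤ 1 →
          ∃ g ∈ N, ∀ t : Node, |Vop (wgt 2) f t - g t| ≤ ε := by
  refine ⟨20, by norm_num, ?_⟩
  intro n hn ε hε
  have hpow : 20 * (n : ℝ) ^ (-(1 : ℝ) / 2) = 20 / √n := by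
    rw [Real.sqrt_eq_rpow, neg_div, Real.rpow_neg (by positivity)]; rfl
  rw [hpow] at hε
  rcases le_or_gt n 100 with h | h
  · refine ⟨{0}, by simpa using Nat.one_le_two_pow, ?_⟩
    intro f hf
    refine ⟨0, by simp, fun t => ?_⟩
    obtain ⟨E, hS, hE⟩ := TreeEnt.exists_super f hf
    have h1 := TreeEnt.T_bound hS hE t
    rw [TreeEnt.Vop_eq]
    have h2 : √(n : ℝ) ≤ 10 := by
      rw [Real.sqrt_le_left (by norm_num)]
      have : (n : ℝ) ≤ 100 := by exact_mod_cast h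
      linarith
    have h3 : 0 < √(n : ℝ) := Real.sqrt_pos.2 (by exact_mod_cast hn)
    have h4 : 2 ≤ 20 / √(n : ℝ) := by
      rw [le_div_iff₀ h3]; linarith
    simp only [Pi.zero_apply, sub_zero]
    linarith
  · obtain ⟨N, hN, hc⟩ := TreeEnt.cover n h
    refine ⟨N, hN, fun f hf => ?_⟩
    obtain ⟨g, hg, hgt⟩ := hc f hf
    exact ⟨g, hg, fun t => (hgt t).trans hε.le⟩
end
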